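/- arXiv:2209.06928 — 5 statements merged into one kernel-verified Lean document; each statement's English description precedes it below -/
import Mathlib

section
/- Equivalence of the exponential and rational AdaBoost weight updates: with α = (1/2)·log((1+r)/(1−r)) and normalization constant Z = ∑_{i} w i · exp(−η i · α), one has Z = √(1 − r²), and for every index i, (w i · exp(−η i · α))/Z = w i / (1 + η i · r). -/
/-!
Writing `s = √(1 - r²)`, the choice of `α` makes `exp α = s / (1 - r)` and
`exp (-α) = s / (1 + r)`, so `exp (-(η i * α)) = s / (1 + η i * r)` for either sign `η i = ±1`.
Since `η i ^ 2 = 1`, also `1 / (1 + η i * r) = (1 - η i * r) / (1 - r²)`; hence the weights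
`w i / (1 + η i * r)` sum to `(1 - r * r) / (1 - r²) = 1`. Both claims follow: the normalization
constant is `s`, and dividing by it cancels the factor `s`.
-/

/-- Equivalence of the exponential and rational AdaBoost weight updates: with
`α = (1/2)·log((1+r)/(1−r))` and `Z = ∑ i, w i · exp(−η i · α)`, one has
`Z = √(1 − r²)` and `(w i · exp(−η i · α))/Z = w i / (1 + η i · r)` for every `i`. -/
theorem adaboost_exp_update_eq_rational_update
    (n : ℕ) (w : Fin n → ℝ) (η : Fin n → ℝ)
    (hw : ∀ i, 0 < w i) (hsum : ∑ i, w i = 1)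
    (hη : ∀ i, η i = -1 ∨ η i = 1)
    (r : ℝ) (hr : r = ∑ i, η i * w i) (hr0 : 0 < r) (hr1 : r < 1)
    (α : ℝ) (hα : α = (1 / 2) * Real.log ((1 + r) / (1 - r)))
    (Z : ℝ) (hZ : Z = ∑ i, w i * Real.exp (-(η i * α))) :
    Z = Real.sqrt (1 - r ^ 2) ∧
    ∀ i, w i * Real.exp (-(η i * α)) / Z = w i / (1 + η i * r) := by
  have h1 : 0 < 1 - r := by linarith
  have h2 : 0 < 1 + r := by linarith
  have h3 : 0 < 1 - r ^ 2 := by nlinarith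
  obtain ⟨s, hs⟩ : ∃ s, s = Real.sqrt (1 - r ^ 2) := ⟨_, rfl⟩
  have hs0 : 0 < s := hs ▸ Real.sqrt_pos.mpr h3
  have hs2 : s ^ 2 = 1 - r ^ 2 := hs ▸ Real.sq_sqrt h3.le
  have hexp2 : Real.exp α ^ 2 = (1 + r) / (1 - r) := by
    rw [← Real.exp_nat_mul, hα, ← Real.exp_log (div_pos h2 h1)]
    congr 1
    rw [Real.exp_log (div_pos h2 h1)]
    push_cast
    ring
  -- Both sides are positive with the same square.
  have hexp : Real.exp α = s / (1 - r) := by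
    rw [← sq_eq_sq₀ (Real.exp_pos α).le (div_pos hs0 h1).le, hexp2, div_pow, hs2]
    field_simp
    ring
  have hpos : ∀ i, 0 < 1 + η i * r := by
    intro i
    rcases hη i with h | h <;> rw [h] <;> linarith
  have key : ∀ i, Real.exp (-(η i * α)) = s / (1 + η i * r) := by
    intro i
    rcases hη i with h | h
    · rw [h, neg_one_mul, neg_neg, hexp, neg_one_mul, ← sub_eq_add_neg]
    · rw [h, one_mul, one_mul, Real.exp_neg, hexp, inv_div, div_eq_div_iff hs0.ne' h2.ne']
      linarith
  have hZs : Z = s := by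
    have hterm : ∀ i, w i * Real.exp (-(η i * α))
        = s / (1 - r ^ 2) * (w i - r * (η i * w i)) := by
      intro i
      have hsq : η i ^ 2 = 1 := by rcases hη i with h | h <;> rw [h] <;> norm_num
      have hfac : 1 - r ^ 2 = (1 + η i * r) * (1 - η i * r) := by
        linear_combination r ^ 2 * hsq
      have hne := (hpos i).ne'
      have hne' : 1 - η i * r ≠ 0 := fun h => h3.ne' (by rw [hfac, h, mul_zero])
      rw [key i, hfac]
      field_simp
    rw [hZ, Finset.sum_congr rfl fun i _ => hterm i, ← Finset.mul_sum, Finset.sum_sub_distrib,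
      ← Finset.mul_sum, hsum, ← hr, ← sq, div_mul_cancel₀ _ h3.ne']
  refine ⟨hZs.trans hs, fun i => ?_⟩
  have hne := (hpos i).ne'
  rw [key i, hZs]
  field_simp
end

section
/- Simplified edge update under periodic learning (forward direction of Theorem on the 3-weight update): if for every i, η i = −1 implies η' i = 1 (the periodic learning condition at this step, i.e. J⁻ = ∅), then the new edge satisfies r' = (1 + r − 2·∑_{i ∈ J⁺} w i)/(1 + r), where J⁺ = {i : η i = 1 ∧ η' i = −1}. -/
/-!
Each weight satisfies `w' i = a * w i + b * (η i * w i)`, where `a + b = 1 / (1 + r)` and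
`a - b = 1 / (1 - r)`. Since `J⁻ = ∅`, the sign `η' i` is `-1` exactly on `J⁺`, where it changes the
contribution to the edge by `-2 / (1 + r) * w i`. Summing with `∑ w i = 1` and `∑ η i * w i = r`
gives `r' = a + b * r - 2 / (1 + r) * ∑_{J⁺} w i`, and `a + b * r = 1`.
-/

/-- Simplified edge update under the periodic learning condition (forward direction):
if `η i = −1` implies `η' i = 1` for every `i` (i.e. `J⁻ = ∅`), then the new edge
satisfies `r' = (1 + r − 2·∑_{i ∈ J⁺} w i)/(1 + r)` where
`J⁺ = {i : η i = 1 ∧ η' i = −1}`. -/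
theorem adaboost_edge_update_periodic_learning
    (n : ℕ) (w : Fin n → ℝ) (η η' : Fin n → ℝ)
    (hw : ∀ i, 0 < w i) (hsum : ∑ i, w i = 1)
    (hη : ∀ i, η i = -1 ∨ η i = 1) (hη' : ∀ i, η' i = -1 ∨ η' i = 1)
    (r : ℝ) (hr : r = ∑ i, η i * w i) (hr0 : 0 < r) (hr1 : r < 1)
    (w' : Fin n → ℝ) (hw' : ∀ i, w' i = w i / (1 + η i * r))
    (r' : ℝ) (hr' : r' = ∑ i, η' i * w' i)
    (hplc : ∀ i, η i = -1 → η' i = 1) :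
    r' = (1 + r - 2 * ∑ i ∈ Finset.univ.filter (fun i => η i = 1 ∧ η' i = -1), w i)
          / (1 + r) := by
  have hp : 1 + r ≠ 0 := by linarith
  have hm : 1 - r ≠ 0 := by linarith
  have key : ∀ i, η' i * w' i =
      (1 / (1 - r) + 1 / (1 + r)) / 2 * w i + (1 / (1 + r) - 1 / (1 - r)) / 2 * (η i * w i)
        - 2 / (1 + r) * (if η i = 1 ∧ η' i = -1 then w i else 0) := by
    intro i
    rw [hw']
    rcases hη i with h | h
    · have h1 : ¬ ((-1 : ℝ) = 1) := by norm_num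
      have h2 : 1 + -1 * r = 1 - r := by ring
      rw [hplc i h, h, if_neg (fun hc => h1 hc.1), h2]
      ring
    · rcases hη' i with h' | h'
      · rw [h, h', if_pos ⟨rfl, rfl⟩, one_mul]
        ring
      · have h1 : ¬ ((1 : ℝ) = -1) := by norm_num
        rw [h, h', if_neg (fun hc => h1 hc.2), one_mul]
        ring
  rw [hr', Finset.sum_congr rfl (fun i _ => key i), Finset.sum_sub_distrib,
    Finset.sum_add_distrib, ← Finset.mul_sum, ← Finset.mul_sum, ← Finset.mul_sum, hsum, ← hr,
    ← Finset.sum_filter]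
  field_simp
  ring
end

section
/- Converse direction of the simplified edge update theorem: if the new edge satisfies r' = (1 + r − 2·∑_{i ∈ J⁺} w i)/(1 + r), where J⁺ = {i : η i = 1 ∧ η' i = −1}, then there is no index i with η i = −1 and η' i = −1 (i.e. J⁻ = ∅, the periodic learning condition holds at this step). -/
/-!
The updated weights again sum to one, because `w' i = w i * (1 - η i * r) / (1 - r ^ 2)` when
`η i = ±1`. Splitting off the indices with `η' i = -1` therefore gives the general edge update
`r' = 1 - 2 / (1 + r) * ∑_{J⁺} w - 2 / (1 - r) * ∑_{J⁻} w`. Comparison with the assumed formula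
forces `∑_{J⁻} w = 0`, and positivity of the weights makes `J⁻` empty.
-/

/-- Converse direction of the simplified edge update theorem: if the new edge
satisfies `r' = (1 + r − 2·∑_{i ∈ J⁺} w i)/(1 + r)` with
`J⁺ = {i : η i = 1 ∧ η' i = −1}`, then there is no index `i` with `η i = −1` and
`η' i = −1` (i.e. `J⁻ = ∅`; the periodic learning condition holds at this step). -/
theorem adaboost_edge_update_periodic_learning_converse
    (n : ℕ) (w : Fin n → ℝ) (η η' : Fin n → ℝ)
    (hw : ∀ i, 0 < w i) (hsum : ∑ i, w i = 1)
    (hη : ∀ i, η i = -1 ∨ η i = 1) (hη' : ∀ i, η' i = -1 ∨ η' i = 1)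
    (r : ℝ) (hr : r = ∑ i, η i * w i) (hr0 : 0 < r) (hr1 : r < 1)
    (w' : Fin n → ℝ) (hw' : ∀ i, w' i = w i / (1 + η i * r))
    (r' : ℝ) (hr' : r' = ∑ i, η' i * w' i)
    (hform : r' = (1 + r - 2 * ∑ i ∈ Finset.univ.filter
        (fun i => η i = 1 ∧ η' i = -1), w i) / (1 + r)) :
    ∀ i, ¬(η i = -1 ∧ η' i = -1) := by
  have h1 : 1 + r ≠ 0 := by linarith
  have h2 : 1 - r ≠ 0 := by linarith
  have hsq : 1 - r ^ 2 ≠ 0 := by nlinarith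
  have hpt : ∀ i, η' i * w' i = (w i - r * (η i * w i)) / (1 - r ^ 2)
      - 2 / (1 + r) * (if η i = 1 ∧ η' i = -1 then w i else 0)
      - 2 / (1 - r) * (if η i = -1 ∧ η' i = -1 then w i else 0) := by
    intro i
    have hne : (1 : ℝ) ≠ -1 := by norm_num
    have e : 1 - r ^ 2 = (1 + r) * (1 - r) := by ring
    have h3 : 1 + -1 * r = 1 - r := by ring
    rw [hw', e]
    rcases hη i with h | h <;> rcases hη' i with h' | h' <;>
      simp only [h, h', hne, hne.symm, h3, one_mul, and_self, and_true, and_false,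
        if_true, if_false] <;> field_simp <;> ring
  have hsplit : r' = (1 - r * r) / (1 - r ^ 2)
      - 2 / (1 + r) * (∑ i, if η i = 1 ∧ η' i = -1 then w i else 0)
      - 2 / (1 - r) * (∑ i, if η i = -1 ∧ η' i = -1 then w i else 0) := by
    rw [hr', Finset.sum_congr rfl fun i _ => hpt i, Finset.sum_sub_distrib,
      Finset.sum_sub_distrib, ← Finset.mul_sum, ← Finset.mul_sum, ← Finset.sum_div,
      Finset.sum_sub_distrib, ← Finset.mul_sum, hsum, ← hr]
  rw [← pow_two, div_self hsq] at hsplit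
  rw [Finset.sum_filter, sub_div, div_self h1] at hform
  have hmul : 2 / (1 - r) * (∑ i, if η i = -1 ∧ η' i = -1 then w i else 0) = 0 := by
    linear_combination hsplit - hform
  have hzero : (∑ i, if η i = -1 ∧ η' i = -1 then w i else 0) = 0 :=
    (mul_eq_zero.mp hmul).resolve_left (div_ne_zero two_ne_zero h2)
  rw [Finset.sum_eq_zero_iff_of_nonneg
    (fun i _ => by split_ifs; exacts [(hw i).le, le_rfl])] at hzero
  intro i hi
  have := hzero i (Finset.mem_univ i)
  rw [if_pos hi] at this
  exact (hw i).ne' this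
end

section
/- Farey-inverse forms of the edge update: assume for every i that η i = −1 implies η' i = 1 (periodic learning condition), and let J⁺ = {i : η i = 1 ∧ η' i = −1}. If ∑_{i ∈ J⁺} w i = r/2, then r' = 1/(1 + r) (the right Farey inverse applied to r); if ∑_{i ∈ J⁺} w i = 1/2, then r' = r/(1 + r) (the left Farey inverse applied to r). -/
/-!
The updated weights again sum to `1` (each of the sets `η = 1` and `η = -1` receives total
weight `1/2`). By the periodic learning condition, `η' i = -1` only on `J⁺`, where the updated
weight is `w i / (1 + r)`. Hence `r' = 1 - 2 / (1 + r) * ∑_{i ∈ J⁺} w i`, and both forms follow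
by substituting the value of the sum.
-/

/-- Farey-inverse forms of the edge update: under the periodic learning condition,
if `∑_{i ∈ J⁺} w i = r/2` then `r' = 1/(1 + r)` (the right Farey inverse applied
to `r`), and if `∑_{i ∈ J⁺} w i = 1/2` then `r' = r/(1 + r)` (the left Farey inverse
applied to `r`), where `J⁺ = {i : η i = 1 ∧ η' i = −1}`. -/
theorem adaboost_edge_update_farey_inverse_forms
    (n : ℕ) (w : Fin n → ℝ) (η η' : Fin n → ℝ)
    (hw : ∀ i, 0 < w i) (hsum : ∑ i, w i = 1)
    (hη : ∀ i, η i = -1 ∨ η i = 1) (hη' : ∀ i, η' i = -1 ∨ η' i = 1)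
    (r : ℝ) (hr : r = ∑ i, η i * w i) (hr0 : 0 < r) (hr1 : r < 1)
    (w' : Fin n → ℝ) (hw' : ∀ i, w' i = w i / (1 + η i * r))
    (r' : ℝ) (hr' : r' = ∑ i, η' i * w' i)
    (hplc : ∀ i, η i = -1 → η' i = 1) :
    ((∑ i ∈ Finset.univ.filter (fun i => η i = 1 ∧ η' i = -1), w i) = r / 2 →
      r' = 1 / (1 + r)) ∧
    ((∑ i ∈ Finset.univ.filter (fun i => η i = 1 ∧ η' i = -1), w i) = 1 / 2 →
      r' = r / (1 + r)) := by
  have hp : 1 + r ≠ 0 := by linarith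
  have hm : 1 - r ≠ 0 := by linarith
  -- On `η i = ±1` the factor `1 / (1 + η i * r)` is affine in `η i`; under `hplc` the sign
  -- `η' i` differs from `1` exactly on `J⁺`, where `η i = 1`.
  have hpt : ∀ i, η' i * w' i = (1 / (1 + r) + 1 / (1 - r)) / 2 * w i
      + (1 / (1 + r) - 1 / (1 - r)) / 2 * (η i * w i)
      - 2 / (1 + r) * (if η i = 1 ∧ η' i = -1 then w i else 0) := by
    intro i
    rw [hw' i]
    rcases hη i with h | h
    · have h1 : (1 : ℝ) + -1 * r = 1 - r := by ring
      have hne : ¬ ((-1 : ℝ) = 1 ∧ (1 : ℝ) = -1) := by norm_num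
      rw [hplc i h, h, h1, if_neg hne]
      ring
    · rcases hη' i with h' | h'
      · rw [h, h', one_mul, if_pos ⟨rfl, rfl⟩]
        ring
      · have hne : ¬ ((1 : ℝ) = 1 ∧ (1 : ℝ) = -1) := by norm_num
        rw [h, h', one_mul, if_neg hne]
        ring
  have key : r' = 1 - 2 / (1 + r) *
      ∑ i ∈ Finset.univ.filter (fun i => η i = 1 ∧ η' i = -1), w i := by
    rw [hr', Finset.sum_congr rfl (fun i _ => hpt i), Finset.sum_sub_distrib,
      Finset.sum_add_distrib, ← Finset.mul_sum, ← Finset.mul_sum, ← Finset.mul_sum,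
      hsum, ← hr, Finset.sum_filter]
    congr 1
    field_simp
    ring
  constructor
  · intro hS
    rw [key, hS]
    field_simp
    ring
  · intro hS
    rw [key, hS]
    field_simp
    ring
end

section
/- Values of the three subsums under the periodic learning condition: assume for every i that η i = −1 implies η' i = 1, and set I⁺ = {i : η i = 1 ∧ η' i = 1}, J⁺ = {i : η i = 1 ∧ η' i = −1}, I⁻ = {i : η i = −1 ∧ η' i = 1}. Then ∑_{i ∈ I⁺} w i/(1+r) = r'/2, ∑_{i ∈ I⁻} w i/(1−r) = 1/2, and ∑_{i ∈ J⁺} w i/(1+r) = (1−r')/2. -/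
/-!
Write `a`, `b`, `c` for the subsums over `I⁺`, `I⁻`, `J⁺`. These sets partition the index set, so
`∑ w = 1`, the definition of `r` and the definition of `r'` become the linear system
`(1 + r)(a + c) + (1 - r) b = 1`, `(1 + r)(a + c) - (1 - r) b = r`, `a + b - c = r'`.
The first two give `b = a + c = 1/2`, and the third then determines `a` and `c`.
-/

/-- Values of the three subsums under the periodic learning condition:
`∑_{i ∈ I⁺} w i/(1+r) = r'/2`, `∑_{i ∈ I⁻} w i/(1−r) = 1/2`, and
`∑_{i ∈ J⁺} w i/(1+r) = (1−r')/2`, where `I⁺ = {i : η i = 1 ∧ η' i = 1}`,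
`J⁺ = {i : η i = 1 ∧ η' i = −1}`, `I⁻ = {i : η i = −1 ∧ η' i = 1}`. -/
theorem adaboost_three_subsum_values
    (n : ℕ) (w : Fin n → ℝ) (η η' : Fin n → ℝ)
    (hw : ∀ i, 0 < w i) (hsum : ∑ i, w i = 1)
    (hη : ∀ i, η i = -1 ∨ η i = 1) (hη' : ∀ i, η' i = -1 ∨ η' i = 1)
    (r : ℝ) (hr : r = ∑ i, η i * w i) (hr0 : 0 < r) (hr1 : r < 1)
    (w' : Fin n → ℝ) (hw' : ∀ i, w' i = w i / (1 + η i * r))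
    (r' : ℝ) (hr' : r' = ∑ i, η' i * w' i)
    (hplc : ∀ i, η i = -1 → η' i = 1) :
    (∑ i ∈ Finset.univ.filter (fun i => η i = 1 ∧ η' i = 1), w i / (1 + r)) = r' / 2 ∧
    (∑ i ∈ Finset.univ.filter (fun i => η i = -1 ∧ η' i = 1), w i / (1 - r)) = 1 / 2 ∧
    (∑ i ∈ Finset.univ.filter (fun i => η i = 1 ∧ η' i = -1), w i / (1 + r)) = (1 - r') / 2 := by
  have hp : 1 + r ≠ 0 := by linarith
  have hm : 1 - r ≠ 0 := by linarith
  simp only [Finset.sum_filter]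
  set a := ∑ i, if η i = 1 ∧ η' i = 1 then w i / (1 + r) else 0 with ha
  set b := ∑ i, if η i = -1 ∧ η' i = 1 then w i / (1 - r) else 0 with hb
  set c := ∑ i, if η i = 1 ∧ η' i = -1 then w i / (1 + r) else 0 with hc
  -- `(η i, η' i) = (-1, -1)` is excluded by `hplc`
  have hcases : ∀ i, (η i = 1 ∧ η' i = 1) ∨ (η i = -1 ∧ η' i = 1) ∨ (η i = 1 ∧ η' i = -1) := by
    intro i
    have := hplc i
    have := hη i
    have := hη' i
    tauto
  have h1 : (1 + r) * a + (1 - r) * b + (1 + r) * c = 1 := by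
    conv_rhs => rw [← hsum]
    rw [ha, hb, hc]
    simp only [Finset.mul_sum, ← Finset.sum_add_distrib]
    refine Finset.sum_congr rfl fun i _ => ?_
    rcases hcases i with ⟨h, h'⟩ | ⟨h, h'⟩ | ⟨h, h'⟩ <;> norm_num [h, h'] <;> field_simp
  have h2 : (1 + r) * a - (1 - r) * b + (1 + r) * c = r := by
    conv_rhs => rw [hr]
    rw [ha, hb, hc]
    simp only [Finset.mul_sum, ← Finset.sum_add_distrib, ← Finset.sum_sub_distrib]
    refine Finset.sum_congr rfl fun i _ => ?_
    rcases hcases i with ⟨h, h'⟩ | ⟨h, h'⟩ | ⟨h, h'⟩ <;> norm_num [h, h'] <;> field_simp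
  have h3 : a + b - c = r' := by
    rw [hr', ha, hb, hc]
    simp only [← Finset.sum_add_distrib, ← Finset.sum_sub_distrib]
    refine Finset.sum_congr rfl fun i _ => ?_
    rcases hcases i with ⟨h, h'⟩ | ⟨h, h'⟩ | ⟨h, h'⟩ <;> norm_num [h, h', hw', sub_eq_add_neg]
  have hb2 : b = 1 / 2 := mul_left_cancel₀ hm (by linarith)
  have hac : a + c = 1 / 2 := mul_left_cancel₀ hp (by linarith)
  exact ⟨by linarith, hb2, by linarith⟩
end
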